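/- For every odd n ≥ 5, there exists a linear threshold function f : {-1,1}^n → {-1,1} and a ρ ∈ (0,1) such that Stab_ρ(f) < Stab_ρ(Maj_n). -/

import Mathlib

open Finset

namespace BKS

/-- sign function: 1 if z ≥ 0, -1 otherwise. -/
noncomputable def sgn (z : ℝ) : ℝ := if 0 ≤ z then 1 else -1

/-- encode Bool as the ±1 value of a bit. -/
def chi (b : Bool) : ℝ := if b then 1 else -1

/-- Fourier coefficient of f at S. -/
noncomputable def fourierCoeff {n : ℕ} (f : (Fin n → Bool) → ℝ) (S : Finset (Fin n)) : ℝ :=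
  (1 / 2 ^ n : ℝ) * ∑ x : Fin n → Bool, f x * ∏ i ∈ S, chi (x i)

/-- Fourier weight of f at level k: W^(k)[f]. -/
noncomputable def fourierWeight {n : ℕ} (k : ℕ) (f : (Fin n → Bool) → ℝ) : ℝ :=
  ∑ S ∈ Finset.univ.filter (fun S : Finset (Fin n) => S.card = k), (fourierCoeff f S) ^ 2

/-- Noise stability of f at ρ. -/
noncomputable def noiseStab {n : ℕ} (ρ : ℝ) (f : (Fin n → Bool) → ℝ) : ℝ :=
  ∑ k ∈ Finset.range (n + 1), ρ ^ k * fourierWeight k f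

/-- Majority function on n bits. -/
noncomputable def Maj (n : ℕ) : (Fin n → Bool) → ℝ := fun x => sgn (∑ i, chi (x i))

/-- The function g_n(x) = sgn(2(x_1 + ⋯ + x_{n-3}) + x_{n-2} + x_{n-1} + x_n). -/
noncomputable def gfun (n : ℕ) : (Fin n → Bool) → ℝ :=
  fun x => sgn (∑ i : Fin n, (if (i : ℕ) < n - 3 then (2 : ℝ) else 1) * chi (x i))

/-- f is a linear threshold function. -/
def IsLTF {n : ℕ} (f : (Fin n → Bool) → ℝ) : Prop :=
  ∃ (w0 : ℝ) (w : Fin n → ℝ), ∀ x, f x = sgn (w0 + ∑ i, w i * chi (x i))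



theorem chi_not (b : Bool) : chi (!b) = - chi b := by cases b <;> simp [chi]

theorem sum_count (m : ℕ) (F : ℝ → ℝ) :
    ∑ x : Fin m → Bool, F (∑ i, chi (x i)) =
      ∑ j ∈ range (m + 1), (m.choose j : ℝ) * F (2 * j - m) := by
  have h := Finset.sum_powerset_apply_card (x := (univ : Finset (Fin m))) (fun j : ℕ => F (2 * j - m))
  simp only [card_univ, Fintype.card_fin, nsmul_eq_mul, powerset_univ] at h
  rw [← h]
  refine Finset.sum_bij' (fun x _ => univ.filter (fun i => x i = true))
    (fun S _ => fun i => decide (i ∈ S)) ?_ ?_ ?_ ?_ ?_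
  · simp
  · simp
  · intro x _; ext i; simp
  · intro S _; ext i; simp
  · intro x _
    congr 1
    have : ∀ i, chi (x i) = 2 * (if x i = true then (1 : ℝ) else 0) - 1 := by
      intro i; cases x i <;> norm_num [chi]
    simp_rw [this]
    rw [sum_sub_distrib, ← mul_sum, sum_boole]
    simp

theorem sum_insert {m : ℕ} (i : Fin (m + 1)) (G : ℝ → ℝ) :
    ∑ x : Fin (m + 1) → Bool, G (∑ j, chi (x j)) * chi (x i) =
      ∑ y : Fin m → Bool, (G (1 + ∑ j, chi (y j)) - G (-1 + ∑ j, chi (y j))) := by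
  rw [← (Fin.insertNthEquiv (fun _ => Bool) i).sum_comp, Fintype.sum_prod_type]
  simp only [Fin.insertNthEquiv, Equiv.coe_fn_mk, Fin.sum_univ_succAbove _ i,
    Fin.insertNth_apply_same, Fin.insertNth_apply_succAbove, Fintype.sum_bool]
  simp [chi, sum_add_distrib, sub_eq_add_neg]

theorem maj_coeff (r : ℕ) (i : Fin (2 * r + 1)) :
    ∑ x, Maj (2 * r + 1) x * chi (x i) = 2 * (Nat.centralBinom r : ℝ) := by
  unfold Maj
  rw [sum_insert i sgn, sum_count (2 * r) (fun t => sgn (1 + t) - sgn (-1 + t)),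
    Finset.sum_eq_single r]
  · have h1 : sgn (1 + (2 * (r : ℝ) - ((2 * r : ℕ) : ℝ))) = 1 := by
      push_cast; norm_num [sgn]
    have h2 : sgn (-1 + (2 * (r : ℝ) - ((2 * r : ℕ) : ℝ))) = -1 := by
      push_cast; norm_num [sgn]
    rw [h1, h2, Nat.centralBinom]; ring
  · intro j _ hj
    rcases lt_or_gt_of_ne hj with h | h
    · have h' : (j : ℝ) + 1 ≤ r := by exact_mod_cast h
      rw [sgn, sgn, if_neg, if_neg]
      · ring
      · push_cast; linarith
      · push_cast; linarith
    · have h' : (r : ℝ) + 1 ≤ j := by exact_mod_cast h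
      rw [sgn, sgn, if_pos, if_pos]
      · ring
      · push_cast; linarith
      · push_cast; linarith
  · intro h; exact absurd (mem_range.2 (by omega)) h

/-- odd sign function. -/
noncomputable def sg (z : ℝ) : ℝ := if 0 < z then 1 else if z < 0 then -1 else 0

theorem sg_pos {z : ℝ} (h : 0 < z) : sg z = 1 := by simp [sg, h]
theorem sg_neg {z : ℝ} (h : z < 0) : sg z = -1 := by simp [sg, h, h.le]
theorem sg_zero {z : ℝ} (h : z = 0) : sg z = 0 := by simp [sg, h]
theorem sg_odd (z : ℝ) : sg (-z) = - sg z := by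
  rcases lt_trichotomy z 0 with h | h | h
  · rw [sg_neg h, sg_pos (by linarith)]; ring
  · rw [sg_zero h, sg_zero (by linarith)]; ring
  · rw [sg_pos h, sg_neg (by linarith)]

theorem sg_coeff (k : ℕ) (i : Fin (2 * k + 1 + 1)) :
    ∑ x : Fin (2 * k + 1 + 1) → Bool, sg (∑ j, chi (x j)) * chi (x i) =
      (Nat.centralBinom (k + 1) : ℝ) := by
  rw [sum_insert i sg, sum_count (2 * k + 1) (fun t => sg (1 + t) - sg (-1 + t)),
    Finset.sum_eq_add k (k + 1) (by omega)]
  · rw [sg_zero (z := 1 + (2 * (k : ℝ) - ((2 * k + 1 : ℕ) : ℝ))) (by push_cast; ring),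
      sg_neg (z := -1 + (2 * (k : ℝ) - ((2 * k + 1 : ℕ) : ℝ))) (by push_cast; linarith),
      sg_pos (z := 1 + (2 * ((k + 1 : ℕ) : ℝ) - ((2 * k + 1 : ℕ) : ℝ))) (by push_cast; linarith),
      sg_zero (z := -1 + (2 * ((k + 1 : ℕ) : ℝ) - ((2 * k + 1 : ℕ) : ℝ))) (by push_cast; ring)]
    have : Nat.centralBinom (k + 1) = (2 * k + 1).choose k + (2 * k + 1).choose (k + 1) := by
      rw [Nat.centralBinom, show 2 * (k + 1) = (2 * k + 1) + 1 by ring, Nat.choose_succ_succ]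
    rw [this]; push_cast; ring
  · intro j _ hj
    rcases lt_or_ge j k with h | h
    · have h' : (j : ℝ) + 1 ≤ k := by exact_mod_cast h
      rw [sg_neg, sg_neg]
      · ring
      · push_cast; linarith
      · push_cast; linarith
    · have h2 : k + 2 ≤ j := by omega
      have h' : (k : ℝ) + 2 ≤ j := by exact_mod_cast h2
      rw [sg_pos, sg_pos]
      · ring
      · push_cast; linarith
      · push_cast; linarith
  · intro h; exact absurd (mem_range.2 (by omega)) h
  · intro h; exact absurd (mem_range.2 (by omega)) h

theorem sg_sum (m : ℕ) : ∑ x : Fin m → Bool, sg (∑ j, chi (x j)) = 0 := by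
  have h : ∑ x : Fin m → Bool, sg (∑ j, chi (x j)) =
      ∑ x : Fin m → Bool, - sg (∑ j, chi (x j)) := by
    refine Finset.sum_bij' (fun x _ => fun i => !(x i)) (fun x _ => fun i => !(x i)) ?_ ?_ ?_ ?_ ?_
    · simp
    · simp
    · intro x _; ext i; simp
    · intro x _; ext i; simp
    · intro x _
      simp [chi_not, sg_odd]
  rw [sum_neg_distrib] at h
  linarith

theorem zero_count (r : ℕ) :
    ∑ x : Fin (2 * r) → Bool, (if ∑ j, chi (x j) = 0 then (1 : ℝ) else 0) =
      (Nat.centralBinom r : ℝ) := by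
  rw [sum_count (2 * r) (fun t => if t = 0 then (1 : ℝ) else 0), Finset.sum_eq_single r]
  · simp [Nat.centralBinom]
  · intro j _ hj
    rw [if_neg, mul_zero]
    push_cast
    intro h
    apply hj
    have : (j : ℝ) = r := by linarith
    exact_mod_cast this
  · intro h; exact absurd (mem_range.2 (by omega)) h

/-- the counterexample. -/
noncomputable def gg (m : ℕ) : (Fin (m + 3) → Bool) → ℝ :=
  fun x => sgn (2 * ∑ i : Fin m, chi (x (Fin.castAdd 3 i)) + ∑ j : Fin 3, chi (x (Fin.natAdd m j)))

theorem gg_ltf (m : ℕ) : IsLTF (gg m) := by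
  refine ⟨0, Fin.append (fun _ => 2) (fun _ => 1), fun x => ?_⟩
  rw [Fin.sum_univ_add, gg]
  simp [mul_sum]

theorem sum_split (m : ℕ) (F : (Fin (m + 3) → Bool) → ℝ) :
    ∑ x, F x = ∑ a : Fin m → Bool, ∑ b : Fin 3 → Bool, F (Fin.append a b) := by
  rw [← (Fin.appendEquiv m 3).sum_comp, Fintype.sum_prod_type]
  rfl

theorem sum_fin3 (F : (Fin 3 → Bool) → ℝ) :
    ∑ b, F b = F ![true, true, true] + F ![true, true, false] + F ![true, false, true]
      + F ![true, false, false] + F ![false, true, true] + F ![false, true, false]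
      + F ![false, false, true] + F ![false, false, false] := by
  have : (univ : Finset (Fin 3 → Bool)) = {![true, true, true], ![true, true, false],
    ![true, false, true], ![true, false, false], ![false, true, true], ![false, true, false],
    ![false, false, true], ![false, false, false]} := by decide
  rw [this]
  repeat rw [Finset.sum_insert (by decide)]
  rw [Finset.sum_singleton]
  ring

theorem sgn_pos {z : ℝ} (h : 0 ≤ z) : sgn z = 1 := by simp [sgn, h]
theorem sgn_neg {z : ℝ} (h : z < 0) : sgn z = -1 := by simp [sgn, h]

theorem even_cases (r : ℕ) (a : Fin (2 * r) → Bool) :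
    (∑ i, chi (a i)) = 0 ∨ 2 ≤ (∑ i, chi (a i)) ∨ (∑ i, chi (a i)) ≤ -2 := by
  have : ∀ i, chi (a i) = 2 * (if a i = true then (1 : ℝ) else 0) - 1 := by
    intro i; cases a i <;> norm_num [chi]
  simp_rw [this]
  rw [sum_sub_distrib, ← mul_sum, sum_boole]
  simp only [sum_const, card_univ, Fintype.card_fin, nsmul_eq_mul, mul_one]
  generalize (univ.filter (fun i => a i = true)).card = t
  push_cast
  rcases lt_trichotomy t r with h | h | h
  · have : (t : ℝ) + 1 ≤ r := by exact_mod_cast h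
    right; right; linarith
  · left; rw [h]; ring
  · have : (r : ℝ) + 1 ≤ t := by exact_mod_cast h
    right; left; linarith

theorem inner0 {A : ℝ} (hA : A = 0 ∨ 2 ≤ A ∨ A ≤ -2) :
    ∑ b : Fin 3 → Bool, sgn (2 * A + ∑ j, chi (b j)) = 8 * sg A := by
  rw [sum_fin3]
  simp only [Fin.sum_univ_three, Matrix.cons_val, chi]
  rcases hA with rfl | h | h
  · norm_num [sgn, sg]
  · rw [sg_pos (by linarith)]
    repeat rw [sgn_pos (by norm_num; linarith)]
    norm_num
  · rw [sg_neg (by linarith)]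
    repeat rw [sgn_neg (by norm_num; linarith)]
    norm_num

theorem inner1 {A : ℝ} (hA : A = 0 ∨ 2 ≤ A ∨ A ≤ -2) (i : Fin 3) :
    ∑ b : Fin 3 → Bool, sgn (2 * A + ∑ j, chi (b j)) * chi (b i) =
      4 * (if A = 0 then 1 else 0) := by
  rw [sum_fin3]
  simp only [Fin.sum_univ_three, Matrix.cons_val]
  rcases hA with rfl | h | h
  · fin_cases i <;> norm_num [sgn, chi]
  · rw [if_neg (by linarith)]
    repeat rw [sgn_pos (by norm_num [chi]; linarith)]
    fin_cases i <;> norm_num [chi]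
  · rw [if_neg (by linarith)]
    repeat rw [sgn_neg (by norm_num [chi]; linarith)]
    fin_cases i <;> norm_num [chi]

theorem gg_append (m : ℕ) (a : Fin m → Bool) (b : Fin 3 → Bool) :
    gg m (Fin.append a b) = sgn (2 * ∑ i, chi (a i) + ∑ j, chi (b j)) := by
  simp [gg]

theorem gg_coeff0 (r : ℕ) : ∑ x, gg (2 * r) x = 0 := by
  rw [sum_split]
  simp_rw [gg_append, inner0 (even_cases r _)]
  rw [← mul_sum, sg_sum, mul_zero]

theorem gg_coeffA (k : ℕ) (i : Fin (2 * (k + 1))) :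
    ∑ x, gg (2 * (k + 1)) x * chi (x (Fin.castAdd 3 i)) = 8 * (Nat.centralBinom (k + 1) : ℝ) := by
  rw [sum_split]
  simp_rw [gg_append, Fin.append_left, ← sum_mul, inner0 (even_cases (k + 1) _), mul_assoc]
  rw [← mul_sum]
  congr 1
  exact sg_coeff k i

theorem gg_coeffB (r : ℕ) (i : Fin 3) :
    ∑ x, gg (2 * r) x * chi (x (Fin.natAdd (2 * r) i)) = 4 * (Nat.centralBinom r : ℝ) := by
  rw [sum_split]
  simp_rw [gg_append, Fin.append_right, inner1 (even_cases r _)]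
  rw [← mul_sum, zero_count]

theorem weight_zero {n : ℕ} (f : (Fin n → Bool) → ℝ) (h : ∑ x, f x = 0) :
    fourierWeight 0 f = 0 := by
  unfold fourierWeight
  apply Finset.sum_eq_zero
  intro S hS
  have : S = ∅ := by simpa using hS
  subst this
  simp [fourierCoeff, h]

theorem weight_one {n : ℕ} (f : (Fin n → Bool) → ℝ) :
    fourierWeight 1 f = (1 / 2 ^ n : ℝ) ^ 2 * ∑ i, (∑ x, f x * chi (x i)) ^ 2 := by
  unfold fourierWeight
  have : (univ.filter (fun S : Finset (Fin n) => S.card = 1)) =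
      univ.map ⟨fun i : Fin n => ({i} : Finset (Fin n)), Finset.singleton_injective⟩ := by
    ext S
    simp [Finset.card_eq_one, eq_comm]
  rw [this, sum_map, mul_sum]
  refine sum_congr rfl fun i _ => ?_
  simp [fourierCoeff, mul_pow]

theorem weight_nonneg {n : ℕ} (k : ℕ) (f : (Fin n → Bool) → ℝ) : 0 ≤ fourierWeight k f :=
  Finset.sum_nonneg fun _ _ => sq_nonneg _

theorem exists_rho {n : ℕ} (f g : (Fin (n + 1) → Bool) → ℝ) (h0 : fourierWeight 0 f = 0)
    (h1 : fourierWeight 1 f < fourierWeight 1 g) :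
    ∃ ρ : ℝ, 0 < ρ ∧ ρ < 1 ∧ noiseStab ρ f < noiseStab ρ g := by
  set D := fourierWeight 1 g - fourierWeight 1 f with hD
  have hDp : 0 < D := by linarith
  set T := ∑ k ∈ range n, fourierWeight (k + 2) f with hT
  have hTp : 0 ≤ T := Finset.sum_nonneg fun _ _ => weight_nonneg _ _
  have hr0 : 0 < D / (T + D + 1) := by positivity
  have hr1 : D / (T + D + 1) < 1 := by rw [div_lt_one (by positivity)]; linarith
  have hrT : D / (T + D + 1) * T < D := by
    rw [div_mul_eq_mul_div, div_lt_iff₀ (by positivity)]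
    nlinarith
  refine ⟨D / (T + D + 1), hr0, hr1, ?_⟩
  generalize D / (T + D + 1) = ρ at *
  unfold noiseStab
  rw [sum_range_succ', sum_range_succ', sum_range_succ' _ (n + 1), sum_range_succ' _ n]
  have hf : ∑ k ∈ range n, ρ ^ (k + 1 + 1) * fourierWeight (k + 1 + 1) f ≤ ρ ^ 2 * T := by
    rw [hT, mul_sum]
    refine sum_le_sum fun k _ => mul_le_mul_of_nonneg_right ?_ (weight_nonneg _ _)
    exact pow_le_pow_of_le_one hr0.le hr1.le (by omega)
  have hg : 0 ≤ ∑ k ∈ range n, ρ ^ (k + 1 + 1) * fourierWeight (k + 1 + 1) g :=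
    Finset.sum_nonneg fun _ _ => mul_nonneg (by positivity) (weight_nonneg _ _)
  have hg0 := weight_nonneg 0 g
  have := mul_lt_mul_of_pos_left hrT hr0
  simp only [h0, zero_add, pow_zero, pow_one, mul_zero, one_mul, add_zero]
  rw [hD] at this
  nlinarith

theorem stmt11 (n : ℕ) (hn : Odd n) (h5 : 5 ≤ n) :
    ∃ f : (Fin n → Bool) → ℝ, IsLTF f ∧
      ∃ ρ : ℝ, 0 < ρ ∧ ρ < 1 ∧ noiseStab ρ f < noiseStab ρ (Maj n) := by
  obtain ⟨t, rfl⟩ := hn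
  obtain ⟨k, rfl⟩ : ∃ k, t = k + 2 := ⟨t - 2, by omega⟩
  change ∃ f : (Fin (2 * (k + 1) + 3) → Bool) → ℝ, _
  refine ⟨gg (2 * (k + 1)), gg_ltf _, ?_⟩
  refine exists_rho (n := 2 * (k + 1) + 2) (gg (2 * (k + 1))) (Maj (2 * (k + 2) + 1))
    (weight_zero _ (gg_coeff0 (k + 1))) ?_
  have hM : fourierWeight 1 (Maj (2 * (k + 2) + 1)) = _ := weight_one _
  have hG : fourierWeight 1 (gg (2 * (k + 1))) = _ := weight_one _
  simp_rw [maj_coeff] at hM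
  rw [Fin.sum_univ_add] at hG
  simp_rw [gg_coeffA, gg_coeffB] at hG
  simp only [sum_const, card_univ, Fintype.card_fin, nsmul_eq_mul] at hM hG
  refine lt_of_eq_of_lt hG (lt_of_lt_of_eq ?_ hM.symm)
  refine mul_lt_mul_of_pos_left ?_ (by positivity)
  have hc := Nat.succ_mul_centralBinom_succ (k + 1)
  have hc' : ((k : ℝ) + 2) * (Nat.centralBinom (k + 2) : ℝ) =
      2 * (2 * (k + 1) + 1) * (Nat.centralBinom (k + 1) : ℝ) := by exact_mod_cast hc
  have hp : (0 : ℝ) < (Nat.centralBinom (k + 1) : ℝ) := by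
    exact_mod_cast Nat.centralBinom_pos (k + 1)
  have hq : (Nat.centralBinom (k + 2) : ℝ) =
      2 * (2 * (k + 1) + 1) * (Nat.centralBinom (k + 1) : ℝ) / (k + 2) := by
    rw [eq_div_iff (by positivity), ← hc']; ring
  rw [hq]
  generalize (Nat.centralBinom (k + 1) : ℝ) = c at *
  have hk : (0 : ℝ) ≤ k := Nat.cast_nonneg k
  push_cast
  rw [← sub_pos]
  have : (2 * ((k : ℝ) + 2) + 1) * (2 * (2 * (2 * (k + 1) + 1) * c / (k + 2))) ^ 2 -
      (2 * ((k : ℝ) + 1) * (8 * c) ^ 2 + 3 * (4 * c) ^ 2) =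
      16 * c ^ 2 * (k + 1) ^ 2 / (k + 2) ^ 2 := by
    field_simp
    ring
  rw [this]
  positivity

end BKS
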